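/- arXiv:2106.11264 — 2 statements merged into one kernel-verified Lean document; each statement's English description precedes it below -/
import Mathlib

section
/- Let F : ℝᵈ → ℝ be differentiable with L-Lipschitz gradient, let G > 0, η > 0, and let w, w̄, u ∈ ℝᵈ satisfy ‖∇F(w)‖ ≤ G, ‖∇F(w̄)‖ ≤ G, and ‖u‖ ≤ G. Then the point w′ = w − η u satisfies F(w′) ≤ F(w) − η ‖∇F(w̄)‖² + η G ‖u − ∇F(w̄)‖ + η L G ‖w − w̄‖ + (L η²/2) G². -/
/-!
Writing `g = ∇F(w̄)`, the descent lemma for functions with `L`-Lipschitz gradient, applied to the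
displacement `-η u`, reduces the claim to a lower bound for `⟪∇F(w), u⟫`. This comes from the
decomposition `⟪∇F(w), u⟫ = ‖g‖² + ⟪g, u - g⟫ + ⟪∇F(w) - g, u⟫` and Cauchy–Schwarz on the last two
terms.
-/

open Real

/-- The descent lemma: `t ↦ F (x + t v) - t ⟪∇F x, v⟫ - (L / 2) t² ‖v‖²` has nonpositive derivative
for `t ≥ 0`; compare its values at `0` and `1`. -/
lemma descent_lemma {E : Type*} [NormedAddCommGroup E] [InnerProductSpace ℝ E] [CompleteSpace E]
    {F : E → ℝ} {L : ℝ} (hF : Differentiable ℝ F)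
    (hFl : ∀ w₁ w₂, ‖gradient F w₁ - gradient F w₂‖ ≤ L * ‖w₁ - w₂‖) (x v : E) :
    F (x + v) ≤ F x + inner ℝ (gradient F x) v + L / 2 * ‖v‖ ^ 2 := by
  have hderiv : ∀ t : ℝ, HasDerivAt
      (fun t : ℝ => F (x + t • v) - t * inner ℝ (gradient F x) v - L / 2 * ‖v‖ ^ 2 * t ^ 2)
      (inner ℝ (gradient F (x + t • v)) v - inner ℝ (gradient F x) v - L * ‖v‖ ^ 2 * t) t := by
    intro t
    have hline : HasDerivAt (fun t : ℝ => x + t • v) v t := by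
      simpa using ((hasDerivAt_id t).smul_const v).const_add x
    have hcomp := (hF (x + t • v)).hasGradientAt.hasFDerivAt.comp_hasDerivAt t hline
    have hlin := (hasDerivAt_id t).mul_const (inner ℝ (gradient F x) v)
    have hquad := (hasDerivAt_pow 2 t).const_mul (L / 2 * ‖v‖ ^ 2)
    refine ((hcomp.sub hlin).sub hquad).congr_deriv ?_
    rw [InnerProductSpace.toDual_apply_apply]
    push_cast
    ring
  have hanti := antitoneOn_of_deriv_nonpos (convex_Icc (0 : ℝ) 1)
    (fun t _ => (hderiv t).continuousAt.continuousWithinAt)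
    (fun t _ => (hderiv t).differentiableAt.differentiableWithinAt)
    (fun t ht => by
      rw [interior_Icc] at ht
      rw [(hderiv t).deriv, ← inner_sub_left]
      have hcs := real_inner_le_norm (gradient F (x + t • v) - gradient F x) v
      have hlip := hFl (x + t • v) x
      rw [add_sub_cancel_left, norm_smul, Real.norm_of_nonneg ht.1.le] at hlip
      nlinarith [mul_le_mul_of_nonneg_right hlip (norm_nonneg v)])
  have h := hanti (Set.left_mem_Icc.2 zero_le_one) (Set.right_mem_Icc.2 zero_le_one) zero_le_one
  simp only [zero_smul, one_smul, add_zero] at h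
  linarith

/-- one-step descent inequality.  If `F : ℝᵈ → ℝ` is differentiable with
`L`-Lipschitz gradient, `‖∇F(w)‖ ≤ G`, `‖∇F(w̄)‖ ≤ G`, `‖u‖ ≤ G`, and `η > 0`, then
`F(w − η u) ≤ F(w) − η ‖∇F(w̄)‖² + η G ‖u − ∇F(w̄)‖ + η L G ‖w − w̄‖ + (L η²/2) G²`. -/
theorem one_step_descent_inequality (d : ℕ) (L G η : ℝ)
    (hL : 0 ≤ L) (hG : 0 < G) (hη : 0 < η)
    (F : EuclideanSpace ℝ (Fin d) → ℝ)
    (hF : Differentiable ℝ F)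
    (hFl : ∀ w₁ w₂, ‖gradient F w₁ - gradient F w₂‖ ≤ L * ‖w₁ - w₂‖)
    (w wbar u : EuclideanSpace ℝ (Fin d))
    (hw : ‖gradient F w‖ ≤ G) (hwbar : ‖gradient F wbar‖ ≤ G) (hu : ‖u‖ ≤ G) :
    F (w - η • u) ≤ F w - η * ‖gradient F wbar‖ ^ 2
      + η * G * ‖u - gradient F wbar‖
      + η * L * G * ‖w - wbar‖
      + (L * η ^ 2 / 2) * G ^ 2 := by
  have hdesc := descent_lemma hF hFl w (-(η • u))
  rw [← sub_eq_add_neg, inner_neg_right, real_inner_smul_right, norm_neg, norm_smul,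
    Real.norm_of_nonneg hη.le] at hdesc
  set g := gradient F wbar
  have hsplit : inner ℝ (gradient F w) u
      = ‖g‖ ^ 2 + inner ℝ g (u - g) + inner ℝ (gradient F w - g) u := by
    rw [inner_sub_right, inner_sub_left, real_inner_self_eq_norm_sq]
    ring
  have hbias : -(G * ‖u - g‖) ≤ inner ℝ g (u - g) := by
    have hcs := neg_le_of_abs_le (abs_real_inner_le_norm g (u - g))
    have := mul_le_mul_of_nonneg_right hwbar (norm_nonneg (u - g))
    linarith
  have hdrift : -(L * ‖w - wbar‖ * G) ≤ inner ℝ (gradient F w - g) u := by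
    have hcs := neg_le_of_abs_le (abs_real_inner_le_norm (gradient F w - g) u)
    have := mul_le_mul (hFl w wbar) hu (norm_nonneg u) (by positivity)
    linarith
  have hquad : L / 2 * (η * ‖u‖) ^ 2 ≤ L / 2 * (η * G) ^ 2 := by gcongr
  have hinner : η * (‖g‖ ^ 2 - G * ‖u - g‖ - L * ‖w - wbar‖ * G)
      ≤ η * inner ℝ (gradient F w) u :=
    mul_le_mul_of_nonneg_left (by linarith) hη.le
  linarith
end

section
/- Let n ≥ 1. For each i = 1, …, n, let fⁱ : ℝᵈ → ℝᵖ be differentiable with derivative satisfying ‖Dfⁱ(w)‖ ≤ G_f for all w and ‖Dfⁱ(w₁) − Dfⁱ(w₂)‖ ≤ L_f ‖w₁ − w₂‖, and let gⁱ : ℝᵖ → ℝ be differentiable with gradient satisfying ‖∇gⁱ(y)‖ ≤ G_g for all y and ‖∇gⁱ(y₁) − ∇gⁱ(y₂)‖ ≤ L_g ‖y₁ − y₂‖. Set Fⁱ = gⁱ∘fⁱ and F = (1/n) Σᵢ Fⁱ, assume F has L-Lipschitz gradient and is bounded below by F*. Fix a synchronization gap τ ≥ 1, a number of rounds S ≥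 1, and a step size η > 0. Define iterates by: w̄₀ ∈ ℝᵈ is arbitrary; for each round s = 0, …, S−1 and each device i, set wⁱ_{s,0} = w̄ₛ, wⁱ_{s,t+1} = wⁱ_{s,t} − η ∇Fⁱ(wⁱ_{s,t}) for t = 0, …, τ−1, and w̄_{s+1} = (1/n) Σᵢ wⁱ_{s,τ}. Then (1/S) Σ_{s=0}^{S−1} ‖∇F(w̄ₛ)‖² ≤ (F(w̄₀) − F*)/(S τ η) + G_f² G_g² (G_g L_f + G_f² L_g) τ η + L τ η G_f² G_g² + (L η/2) G_f² G_g². -/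
/-!
Write `G = Gf * Gg` and `M = Gg * Lf + Gf ^ 2 * Lg`. By the chain rule every local gradient
`∇Fⁱ = ∇(gⁱ ∘ fⁱ)` is bounded by `G` and `M`-Lipschitz (`norm_gradient_comp_le`,
`norm_gradient_comp_sub_le`).

Within a round the `t`-th local iterate is therefore at distance at most `t η G` from the starting
point `w̄`, so that `τ` local steps amount to the single step `-τ η ∇Fⁱ(w̄)` up to an error of norm
at most `τ η · M τ η G` (`local_drift`, `local_error`). Averaging over the devices, the server
update is `-τ η ∇F(w̄)` up to the same error, and has norm at most `τ η G`. The quadratic upper bound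
`F y ≤ F x + ⟪∇F x, y - x⟫ + L ‖y - x‖²` then gives the one-round descent inequality

`τ η ‖∇F(w̄ₛ)‖² ≤ F(w̄ₛ) - F(w̄ₛ₊₁) + (τ η)² G² (M + L)`,

which telescopes over the rounds. The bound reached in this way is the claimed one without its last
(nonnegative) summand.
-/

open Real BigOperators

section Gradient

variable {E : Type*} [NormedAddCommGroup E] [InnerProductSpace ℝ E] [CompleteSpace E]
  {E' : Type*} [NormedAddCommGroup E'] [InnerProductSpace ℝ E'] [CompleteSpace E']

lemma norm_gradient_eq (h : E → ℝ) (x : E) : ‖gradient h x‖ = ‖fderiv ℝ h x‖ := by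
  simp [gradient]

lemma norm_gradient_sub_eq (h : E → ℝ) (x y : E) :
    ‖gradient h x - gradient h y‖ = ‖fderiv ℝ h x - fderiv ℝ h y‖ := by
  simp only [gradient, ← map_sub, LinearIsometryEquiv.norm_map]

lemma norm_gradient_comp_le {f : E → E'} {g : E' → ℝ} {Gf Gg : ℝ} (hGg : 0 ≤ Gg)
    (hf : Differentiable ℝ f) (hg : Differentiable ℝ g)
    (hfb : ∀ x, ‖fderiv ℝ f x‖ ≤ Gf) (hgb : ∀ y, ‖gradient g y‖ ≤ Gg) (x : E) :
    ‖gradient (g ∘ f) x‖ ≤ Gf * Gg := by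
  rw [norm_gradient_eq, fderiv_comp x (hg _) (hf _), mul_comm]
  refine (ContinuousLinearMap.opNorm_comp_le _ _).trans ?_
  have := hgb (f x)
  rw [norm_gradient_eq] at this
  exact mul_le_mul this (hfb x) (norm_nonneg _) hGg

lemma norm_gradient_comp_sub_le {f : E → E'} {g : E' → ℝ} {Gf Gg Lf Lg : ℝ}
    (hGg : 0 ≤ Gg) (hLg : 0 ≤ Lg)
    (hf : Differentiable ℝ f) (hg : Differentiable ℝ g)
    (hfb : ∀ x, ‖fderiv ℝ f x‖ ≤ Gf) (hgb : ∀ y, ‖gradient g y‖ ≤ Gg)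
    (hfl : ∀ x y, ‖fderiv ℝ f x - fderiv ℝ f y‖ ≤ Lf * ‖x - y‖)
    (hgl : ∀ x y, ‖gradient g x - gradient g y‖ ≤ Lg * ‖x - y‖) (x y : E) :
    ‖gradient (g ∘ f) x - gradient (g ∘ f) y‖ ≤ (Gg * Lf + Gf ^ 2 * Lg) * ‖x - y‖ := by
  rw [norm_gradient_sub_eq, fderiv_comp x (hg _) (hf _), fderiv_comp y (hg _) (hf _)]
  have hsplit : (fderiv ℝ g (f x)).comp (fderiv ℝ f x) - (fderiv ℝ g (f y)).comp (fderiv ℝ f y)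
      = (fderiv ℝ g (f x)).comp (fderiv ℝ f x - fderiv ℝ f y)
        + (fderiv ℝ g (f x) - fderiv ℝ g (f y)).comp (fderiv ℝ f y) := by
    ext v
    simp
  have hfxy : ‖f x - f y‖ ≤ Gf * ‖x - y‖ :=
    Convex.norm_image_sub_le_of_norm_fderiv_le (fun z _ => hf z) (fun z _ => hfb z)
      convex_univ (Set.mem_univ y) (Set.mem_univ x)
  have hGf : 0 ≤ Gf := (norm_nonneg _).trans (hfb x)
  have h1 : ‖(fderiv ℝ g (f x)).comp (fderiv ℝ f x - fderiv ℝ f y)‖ ≤ Gg * (Lf * ‖x - y‖) := by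
    refine (ContinuousLinearMap.opNorm_comp_le _ _).trans ?_
    have := hgb (f x)
    rw [norm_gradient_eq] at this
    exact mul_le_mul this (hfl x y) (norm_nonneg _) hGg
  have h2 : ‖(fderiv ℝ g (f x) - fderiv ℝ g (f y)).comp (fderiv ℝ f y)‖
      ≤ Lg * (Gf * ‖x - y‖) * Gf := by
    refine (ContinuousLinearMap.opNorm_comp_le _ _).trans ?_
    have := hgl (f x) (f y)
    rw [norm_gradient_sub_eq] at this
    exact mul_le_mul (this.trans (mul_le_mul_of_nonneg_left hfxy hLg)) (hfb y)
      (norm_nonneg _) (by positivity)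
  rw [hsplit]
  refine (norm_add_le _ _).trans ((add_le_add h1 h2).trans (le_of_eq (by ring)))

/-- Quadratic upper bound for a function with `L`-Lipschitz gradient, from the mean value
inequality on the segment `[x, y]`; the constant `L` instead of the optimal `L / 2` suffices. -/
lemma le_add_inner_gradient {h : E → ℝ} {L : ℝ} (hL : 0 ≤ L) (hh : Differentiable ℝ h)
    (hl : ∀ x y, ‖gradient h x - gradient h y‖ ≤ L * ‖x - y‖) (x y : E) :
    h y ≤ h x + inner ℝ (gradient h x) (y - x) + L * ‖y - x‖ ^ 2 := by
  have key : ‖h y - h x - fderiv ℝ h x (y - x)‖ ≤ (L * ‖y - x‖) * ‖y - x‖ := by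
    refine Convex.norm_image_sub_le_of_norm_fderiv_le' (𝕜 := ℝ) (s := segment ℝ x y)
      (fun z _ => hh z) (fun z hz => ?_)
      (convex_segment x y) (left_mem_segment ℝ x y) (right_mem_segment ℝ x y)
    rw [← norm_gradient_sub_eq]
    refine (hl z x).trans (mul_le_mul_of_nonneg_left ?_ hL)
    rw [segment_eq_image'] at hz
    obtain ⟨θ, hθ, rfl⟩ := hz
    rw [add_sub_cancel_left, norm_smul, Real.norm_of_nonneg hθ.1]
    exact mul_le_of_le_one_left (norm_nonneg _) hθ.2
  have hin : inner ℝ (gradient h x) (y - x) = fderiv ℝ h x (y - x) := by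
    simp [gradient]
  have := (le_abs_self _).trans key
  rw [hin]
  nlinarith

end Gradient

section LocalSteps

variable {E : Type*} [NormedAddCommGroup E] [NormedSpace ℝ E]
  {v : E → E} {u : ℕ → E} {τ : ℕ} {η G M : ℝ}

lemma local_drift (hη : 0 ≤ η) (hv : ∀ x, ‖v x‖ ≤ G)
    (hu : ∀ t, t < τ → u (t + 1) = u t - η • v (u t)) :
    ∀ t, t ≤ τ → ‖u t - u 0‖ ≤ t * η * G := by
  intro t
  induction t with
  | zero => simp
  | succ t ih =>
    intro ht
    have h1 := ih (by omega)
    have h2 : ‖η • v (u t)‖ ≤ η * G := by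
      rw [norm_smul, Real.norm_of_nonneg hη]
      exact mul_le_mul_of_nonneg_left (hv _) hη
    rw [hu t (by omega), sub_right_comm]
    refine (norm_sub_le _ _).trans ((add_le_add h1 h2).trans (le_of_eq ?_))
    push_cast
    ring

/-- `t` local steps differ from one step of size `t η` along `-v (u 0)` by an amount that is
second order in `η`. -/
lemma local_error (hη : 0 ≤ η) (hM : 0 ≤ M) (hv : ∀ x, ‖v x‖ ≤ G)
    (hvl : ∀ x y, ‖v x - v y‖ ≤ M * ‖x - y‖)
    (hu : ∀ t, t < τ → u (t + 1) = u t - η • v (u t)) :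
    ∀ t, t ≤ τ → ‖u t - u 0 + (t * η) • v (u 0)‖ ≤ t * η * (M * (τ * η * G)) := by
  have hG : 0 ≤ G := (norm_nonneg _).trans (hv 0)
  intro t
  induction t with
  | zero => simp
  | succ t ih =>
    intro ht
    have h1 := ih (by omega)
    have h2 : ‖η • (v (u t) - v (u 0))‖ ≤ η * (M * (τ * η * G)) := by
      rw [norm_smul, Real.norm_of_nonneg hη]
      refine mul_le_mul_of_nonneg_left ((hvl _ _).trans ?_) hη
      refine mul_le_mul_of_nonneg_left
        ((local_drift hη hv hu t (by omega)).trans ?_) hM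
      have : (t : ℝ) ≤ τ := by exact_mod_cast (by omega : t ≤ τ)
      gcongr
    have hsplit : u (t + 1) - u 0 + (((t + 1 : ℕ) : ℝ) * η) • v (u 0)
        = (u t - u 0 + (t * η) • v (u 0)) - η • (v (u t) - v (u 0)) := by
      rw [hu t (by omega)]
      push_cast
      module
    rw [hsplit]
    refine (norm_sub_le _ _).trans ((add_le_add h1 h2).trans (le_of_eq ?_))
    push_cast
    ring

lemma norm_average_le {n : ℕ} (hn : 1 ≤ n) (x : Fin n → E) {c : ℝ} (hx : ∀ i, ‖x i‖ ≤ c) :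
    ‖(n : ℝ)⁻¹ • ∑ i, x i‖ ≤ c := by
  have hn' : (0 : ℝ) < n := by exact_mod_cast hn
  rw [norm_smul, Real.norm_of_nonneg (by positivity), inv_mul_le_iff₀ hn']
  refine (norm_sum_le_of_le _ (fun i _ => hx i)).trans ?_
  simp

lemma average_const {n : ℕ} (hn : 1 ≤ n) (x : E) : (n : ℝ)⁻¹ • ∑ _i : Fin n, x = x := by
  have hn' : (n : ℝ) ≠ 0 := by exact_mod_cast (by omega : n ≠ 0)
  simp [← Nat.cast_smul_eq_nsmul ℝ, smul_smul, hn']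

end LocalSteps

/-- deterministic, full-gradient, full-participation convergence theorem for
ComFedL.  With `n` devices having composition objectives `Fⁱ = gⁱ ∘ fⁱ`, `F = (1/n) ∑ᵢ Fⁱ`
having `L`-Lipschitz gradient and lower bound `F*`, synchronization gap `τ`, `S` rounds,
step size `η`, local full-gradient steps, and server averaging, the average of the squared
gradient norms at the round starting points is bounded as stated. -/
theorem comfedl_deterministic_convergence (d p n : ℕ) (hn : 1 ≤ n)
    (Gf Gg Lf Lg L Fstar : ℝ)
    (hGf : 0 < Gf) (hGg : 0 < Gg) (hLf : 0 < Lf) (hLg : 0 < Lg) (hL : 0 < L)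
    (τ S : ℕ) (hτ : 1 ≤ τ) (hS : 1 ≤ S) (η : ℝ) (hη : 0 < η)
    (f : Fin n → EuclideanSpace ℝ (Fin d) → EuclideanSpace ℝ (Fin p))
    (g : Fin n → EuclideanSpace ℝ (Fin p) → ℝ)
    (hfdiff : ∀ i, Differentiable ℝ (f i))
    (hfb : ∀ i w, ‖fderiv ℝ (f i) w‖ ≤ Gf)
    (hfl : ∀ i w₁ w₂, ‖fderiv ℝ (f i) w₁ - fderiv ℝ (f i) w₂‖ ≤ Lf * ‖w₁ - w₂‖)
    (hgdiff : ∀ i, Differentiable ℝ (g i))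
    (hgb : ∀ i y, ‖gradient (g i) y‖ ≤ Gg)
    (hgl : ∀ i y₁ y₂, ‖gradient (g i) y₁ - gradient (g i) y₂‖ ≤ Lg * ‖y₁ - y₂‖)
    (F : EuclideanSpace ℝ (Fin d) → ℝ)
    (hF : ∀ x, F x = (n : ℝ)⁻¹ * ∑ i, g i (f i x))
    (hFl : ∀ w₁ w₂, ‖gradient F w₁ - gradient F w₂‖ ≤ L * ‖w₁ - w₂‖)
    (hFlb : ∀ x, Fstar ≤ F x)
    (wbar : ℕ → EuclideanSpace ℝ (Fin d))
    (w : Fin n → ℕ → ℕ → EuclideanSpace ℝ (Fin d))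
    (hw0 : ∀ i s, w i s 0 = wbar s)
    (hstep : ∀ i s t, t < τ →
      w i s (t + 1) = w i s t - η • gradient (g i ∘ f i) (w i s t))
    (havg : ∀ s, wbar (s + 1) = (n : ℝ)⁻¹ • ∑ i, w i s τ) :
    (S : ℝ)⁻¹ * ∑ s ∈ Finset.range S, ‖gradient F (wbar s)‖ ^ 2 ≤
      (F (wbar 0) - Fstar) / ((S : ℝ) * τ * η)
      + Gf ^ 2 * Gg ^ 2 * (Gg * Lf + Gf ^ 2 * Lg) * τ * η
      + L * τ * η * Gf ^ 2 * Gg ^ 2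
      + (L * η / 2) * Gf ^ 2 * Gg ^ 2 := by
  set G : ℝ := Gf * Gg with hGdef
  set M : ℝ := Gg * Lf + Gf ^ 2 * Lg with hMdef
  have hG : 0 < G := by positivity
  have hM : 0 < M := by positivity
  have hτ' : (0 : ℝ) < τ := by exact_mod_cast hτ
  have hS' : (0 : ℝ) < S := by exact_mod_cast hS
  have hcdiff : ∀ i, Differentiable ℝ (g i ∘ f i) := fun i => (hgdiff i).comp (hfdiff i)
  have hvb : ∀ i x, ‖gradient (g i ∘ f i) x‖ ≤ G := fun i x =>
    norm_gradient_comp_le hGg.le (hfdiff i) (hgdiff i) (hfb i) (hgb i) x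
  have hvl : ∀ i x y, ‖gradient (g i ∘ f i) x - gradient (g i ∘ f i) y‖ ≤ M * ‖x - y‖ :=
    fun i x y => norm_gradient_comp_sub_le hGg.le hLg.le (hfdiff i) (hgdiff i) (hfb i) (hgb i)
      (hfl i) (hgl i) x y
  have hFgrad : ∀ x, HasGradientAt F ((n : ℝ)⁻¹ • ∑ i, gradient (g i ∘ f i) x) x := by
    intro x
    have hFeq : F = fun x => (n : ℝ)⁻¹ * ∑ i, (g i ∘ f i) x := funext hF
    rw [hasGradientAt_iff_hasFDerivAt, hFeq, map_smul, map_sum]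
    exact (HasFDerivAt.fun_sum fun i _ =>
      (hcdiff i x).hasGradientAt.hasFDerivAt).const_mul _
  have hFdiff : Differentiable ℝ F := fun x => (hFgrad x).differentiableAt
  have hdescent : ∀ s, τ * η * ‖gradient F (wbar s)‖ ^ 2
      ≤ F (wbar s) - F (wbar (s + 1)) + (τ * η) ^ 2 * G ^ 2 * (M + L) := by
    intro s
    have hgs := (hFgrad (wbar s)).gradient
    set a := gradient F (wbar s)
    have ha : ‖a‖ ≤ G := by
      rw [hgs]
      exact norm_average_le hn _ fun i => hvb i _
    have hdiff : wbar (s + 1) - wbar s = (n : ℝ)⁻¹ • ∑ i, (w i s τ - w i s 0) := by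
      simp only [hw0, Finset.sum_sub_distrib, smul_sub, average_const hn, havg]
    have hmove : ‖wbar (s + 1) - wbar s‖ ≤ τ * η * G := by
      rw [hdiff]
      exact norm_average_le hn _ fun i =>
        local_drift hη.le (hvb i) (hstep i s) τ le_rfl
    have herr : ‖wbar (s + 1) - wbar s + (τ * η) • a‖ ≤ τ * η * (M * (τ * η * G)) := by
      have : wbar (s + 1) - wbar s + (τ * η) • a = (n : ℝ)⁻¹ • ∑ i,
          (w i s τ - w i s 0 + (τ * η) • gradient (g i ∘ f i) (w i s 0)) := by
        rw [Finset.sum_add_distrib, smul_add, ← hdiff, ← Finset.smul_sum, smul_comm, hgs]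
        simp only [hw0]
      rw [this]
      exact norm_average_le hn _ fun i =>
        local_error hη.le hM.le (hvb i) (hvl i) (hstep i s) τ le_rfl
    have hq := le_add_inner_gradient hL.le hFdiff hFl (wbar s) (wbar (s + 1))
    have hin : inner ℝ a (wbar (s + 1) - wbar s)
        ≤ G * (τ * η * (M * (τ * η * G))) - τ * η * ‖a‖ ^ 2 := by
      have h1 := (real_inner_le_norm a (wbar (s + 1) - wbar s + (τ * η) • a)).trans
        (mul_le_mul ha herr (norm_nonneg _) hG.le)
      rw [inner_add_right, real_inner_smul_right, real_inner_self_eq_norm_sq] at h1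
      linarith
    have hsq : L * ‖wbar (s + 1) - wbar s‖ ^ 2 ≤ L * (τ * η * G) ^ 2 := by gcongr
    linarith
  have hsum : τ * η * ∑ s ∈ Finset.range S, ‖gradient F (wbar s)‖ ^ 2
      ≤ F (wbar 0) - Fstar + S * ((τ * η) ^ 2 * G ^ 2 * (M + L)) := by
    rw [Finset.mul_sum]
    refine (Finset.sum_le_sum fun s _ => hdescent s).trans ?_
    rw [Finset.sum_add_distrib, Finset.sum_range_sub']
    simp only [Finset.sum_const, Finset.card_range, nsmul_eq_mul]
    linarith [hFlb (wbar S)]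
  have hlast : 0 ≤ (L * η / 2) * Gf ^ 2 * Gg ^ 2 := by positivity
  have hdiv : (S : ℝ)⁻¹ * ∑ s ∈ Finset.range S, ‖gradient F (wbar s)‖ ^ 2
      ≤ (F (wbar 0) - Fstar + S * ((τ * η) ^ 2 * G ^ 2 * (M + L))) / (S * τ * η) := by
    rw [le_div_iff₀ (by positivity)]
    refine le_trans (le_of_eq ?_) hsum
    field_simp
  have hexp : (F (wbar 0) - Fstar + S * ((τ * η) ^ 2 * G ^ 2 * (M + L))) / (S * τ * η)
      = (F (wbar 0) - Fstar) / (S * τ * η) + Gf ^ 2 * Gg ^ 2 * M * τ * η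
        + L * τ * η * Gf ^ 2 * Gg ^ 2 := by
    rw [hGdef]
    field_simp
    ring
  linarith
end
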